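/- Let G be an n-vertex unicyclic graph with unique cycle C_l = v_1…v_l and branches T_1,…,T_l, and let x ∈ V(T_k). Then the cover cost satisfies CC(x) = 2·Kf(G) + Σ_{i=1}^{l} D_{T_i}(v_i) − n·d(x, v_k), where CC(x) = Σ_{y∈V(G)} H_{xy}. -/

import Mathlib

open SimpleGraph Finset

attribute [local instance] Classical.propDecidable

variable {V : Type*}

/-- Degree of a vertex as a real number. -/
noncomputable def degR [Fintype V] (G : SimpleGraph V) (x : V) : ℝ :=
  ((Finset.univ.filter fun y => G.Adj x y).card : ℝ)

/-- Number of edges of a graph. -/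
noncomputable def esize (G : SimpleGraph V) : ℕ := Nat.card G.edgeSet

/-- Dirichlet energy of a potential. -/
noncomputable def energyFn [Fintype V] (G : SimpleGraph V) (φ : V → ℝ) : ℝ :=
  (1/2) * ∑ u, ∑ v, if G.Adj u v then (φ u - φ v)^2 else 0

/-- Effective resistance between two vertices (unit resistors on edges),
via the Dirichlet variational principle: the reciprocal of the minimal energy
of a potential with value 1 at `x` and 0 at `y`. -/
noncomputable def eres [Fintype V] (G : SimpleGraph V) (x y : V) : ℝ :=
  (sInf {e : ℝ | ∃ φ : V → ℝ, φ x = 1 ∧ φ y = 0 ∧ e = energyFn G φ})⁻¹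

/-- The transition matrix of the simple random walk, killed at `y`. -/
noncomputable def hitMat [Fintype V] (G : SimpleGraph V) (y : V) : Matrix V V ℝ :=
  Matrix.of fun u v => if v = y then 0 else if G.Adj u v then (degR G u)⁻¹ else 0

/-- Expected hitting time `H_{xy}` of the simple random walk from `x` to `y`,
expressed as the sum of the survival probabilities of the walk killed at `y`. -/
noncomputable def hitting [Fintype V] (G : SimpleGraph V) (x y : V) : ℝ :=
  if x = y then 0 else ∑' k : ℕ, ∑ z, (hitMat G y ^ k) x z

/-- Resistance-centrality `R(x)`. -/
noncomputable def Rres [Fintype V] (G : SimpleGraph V) (x : V) : ℝ := ∑ y, eres G x y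

/-- Weighted resistance-centrality `R^w(x)`. -/
noncomputable def Rw [Fintype V] (G : SimpleGraph V) (x : V) : ℝ :=
  ∑ y, degR G y * eres G x y

/-- Kirchhoff index `Kf(G)`. -/
noncomputable def Kf [Fintype V] (G : SimpleGraph V) : ℝ :=
  (1/2) * ∑ x, ∑ y, eres G x y

/-- Additive degree-Kirchhoff index `Kf⁺(G)`. -/
noncomputable def KfPlus [Fintype V] (G : SimpleGraph V) : ℝ :=
  (1/2) * ∑ x, ∑ y, (degR G x + degR G y) * eres G x y

/-- Multiplicative degree-Kirchhoff index `Kf*(G)`. -/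
noncomputable def KfStar [Fintype V] (G : SimpleGraph V) : ℝ :=
  (1/2) * ∑ x, ∑ y, degR G x * degR G y * eres G x y

/-- Cover cost `CC(x) = Σ_y H_{xy}`. -/
noncomputable def coverCost [Fintype V] (G : SimpleGraph V) (x : V) : ℝ :=
  ∑ y, hitting G x y

/-- Reverse cover cost `RC(x) = Σ_y H_{yx}`. -/
noncomputable def reverseCoverCost [Fintype V] (G : SimpleGraph V) (x : V) : ℝ :=
  ∑ y, hitting G y x

/-- Centrality (transmission) `D(x) = Σ_y d(x,y)`. -/
noncomputable def Dcent [Fintype V] (G : SimpleGraph V) (x : V) : ℝ :=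
  ∑ y, (G.dist x y : ℝ)

/-- Weighted centrality `D^w(x) = Σ_y deg(y)·d(x,y)`. -/
noncomputable def Dw [Fintype V] (G : SimpleGraph V) (x : V) : ℝ :=
  ∑ y, degR G y * (G.dist x y : ℝ)

/-- Wiener index `W(G)`. -/
noncomputable def Wiener [Fintype V] (G : SimpleGraph V) : ℝ :=
  (1/2) * ∑ x, ∑ y, (G.dist x y : ℝ)

/-- `D_{T}(v)`: sum of distances from `v` to the vertices of its connected
component in `G'` (used for the branch trees of a unicyclic graph). -/
noncomputable def branchD [Fintype V] (G' : SimpleGraph V) (v : V) : ℝ :=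
  ∑ u, if G'.Reachable v u then (G'.dist v u : ℝ) else 0

/-- The set of edges of the cycle `c 0 - c 1 - ⋯ - c (l-1) - c 0`. -/
def cycleEdges {l : ℕ} [NeZero l] (c : Fin l → V) : Set (Sym2 V) :=
  Set.range fun i : Fin l => s(c i, c (i + 1))

/-- Distance from a vertex to a set of vertices. -/
noncomputable def distToSet [Fintype V] (G : SimpleGraph V) (x : V) (s : Set V) : ℕ :=
  sInf {d | ∃ y ∈ s, G.dist x y = d}

/-- `v` is the center of a star. -/
def IsStarCenter (G : SimpleGraph V) (v : V) : Prop := ∀ u, u ≠ v → G.Adj v u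

/-- `G` is a star. -/
def IsStar (G : SimpleGraph V) : Prop := ∃ v, IsStarCenter G v

/-- The lollipop graph `P_n^l` : a cycle `C_l` on `0,…,l-1` together with a
path on `l,…,n-1` attached at the cycle vertex `0`. -/
def lollipop (n l : ℕ) : SimpleGraph (Fin n) :=
  SimpleGraph.fromRel (fun a b =>
    (a.val + 1 = b.val ∧ b.val < l) ∨ (a.val = 0 ∧ b.val = l - 1) ∨
    (a.val = 0 ∧ b.val = l) ∨ (l ≤ a.val ∧ a.val + 1 = b.val))

/-- The graph `S_n^l` : a cycle `C_l` on `0,…,l-1` with `n - l` pendant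
vertices `l,…,n-1` attached at the cycle vertex `0`. -/
def starCycle (n l : ℕ) : SimpleGraph (Fin n) :=
  SimpleGraph.fromRel (fun a b =>
    (a.val + 1 = b.val ∧ b.val < l) ∨ (a.val = 0 ∧ b.val = l - 1) ∨
    (a.val = 0 ∧ l ≤ b.val))

/-- The cycle graph `C_n` on `Fin n`. -/
def cycleG (n : ℕ) : SimpleGraph (Fin n) :=
  SimpleGraph.fromRel (fun a b => a.val + 1 = b.val ∨ (a.val = 0 ∧ b.val = n - 1))

noncomputable def Lap [Fintype V] (G : SimpleGraph V) (f : V → ℝ) (x : V) : ℝ :=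
  ∑ y, if G.Adj x y then f x - f y else 0

lemma Lap_form [Fintype V] (G : SimpleGraph V) (f g : V → ℝ) :
    ∑ x, g x * Lap G f x
      = (1/2) * ∑ x, ∑ y, if G.Adj x y then (g x - g y) * (f x - f y) else 0 := by
  have h1 : ∑ x, g x * Lap G f x = ∑ x, ∑ y, if G.Adj x y then g x * (f x - f y) else 0 := by
    refine Finset.sum_congr rfl fun x _ => ?_
    rw [Lap, Finset.mul_sum]
    exact Finset.sum_congr rfl fun y _ => by split_ifs <;> simp
  have h2 : ∑ x, g x * Lap G f x = ∑ x, ∑ y, if G.Adj x y then g y * (f y - f x) else 0 := by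
    rw [h1, Finset.sum_comm]
    exact Finset.sum_congr rfl fun x _ => Finset.sum_congr rfl fun y _ => by
      rw [G.adj_comm]
  have h3 : (∑ x, ∑ y, if G.Adj x y then (g x - g y) * (f x - f y) else 0)
      = ∑ x, g x * Lap G f x + ∑ x, g x * Lap G f x := by
    nth_rewrite 1 [h1]
    rw [h2, ← Finset.sum_add_distrib]
    refine Finset.sum_congr rfl fun x _ => ?_
    rw [← Finset.sum_add_distrib]
    refine Finset.sum_congr rfl fun y _ => ?_
    split_ifs <;> ring
  rw [h3]; ring

lemma Lap_sum_zero [Fintype V] (G : SimpleGraph V) (f : V → ℝ) : ∑ x, Lap G f x = 0 := by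
  have := Lap_form G f (fun _ => 1)
  simpa using this

lemma Lap_add [Fintype V] (G : SimpleGraph V) (f g : V → ℝ) (x : V) :
    Lap G (fun z => f z + g z) x = Lap G f x + Lap G g x := by
  simp only [Lap, ← Finset.sum_add_distrib]
  exact Finset.sum_congr rfl fun y _ => by split_ifs <;> ring

lemma Lap_smul [Fintype V] (G : SimpleGraph V) (a : ℝ) (f : V → ℝ) (x : V) :
    Lap G (fun z => a * f z) x = a * Lap G f x := by
  simp only [Lap, Finset.mul_sum]
  exact Finset.sum_congr rfl fun y _ => by split_ifs <;> ring

lemma Lap_fsum [Fintype V] {ι : Type*} (s : Finset ι) (G : SimpleGraph V) (f : ι → V → ℝ) (x : V) :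
    Lap G (fun z => ∑ i ∈ s, f i z) x = ∑ i ∈ s, Lap G (f i) x := by
  simp only [Lap]
  rw [Finset.sum_comm]
  exact Finset.sum_congr rfl fun y _ => by split_ifs <;> simp

lemma Lap_eq [Fintype V] (G : SimpleGraph V) (f : V → ℝ) (x : V) :
    Lap G f x = degR G x * f x - ∑ y, if G.Adj x y then f y else 0 := by
  have : degR G x * f x = ∑ y, if G.Adj x y then f x else 0 := by
    rw [degR, ← Finset.sum_filter]; simp
  rw [this, Lap, ← Finset.sum_sub_distrib]
  exact Finset.sum_congr rfl fun y _ => by split_ifs <;> ring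

lemma const_of_form [Fintype V] (G : SimpleGraph V) (hG : G.Connected) (f : V → ℝ)
    (h : ∑ x, f x * Lap G f x = 0) (x y : V) : f x = f y := by
  rw [Lap_form] at h
  have h0 : ∑ x, ∑ y, (if G.Adj x y then (f x - f y) * (f x - f y) else 0) = 0 := by linarith
  have nn : ∀ x y, 0 ≤ (if G.Adj x y then (f x - f y) * (f x - f y) else 0) := by
    intro x y; split_ifs
    · exact mul_self_nonneg _
    · exact le_rfl
  have h1 : ∀ x y, G.Adj x y → f x = f y := by
    intro x y hxy
    have := (Finset.sum_eq_zero_iff_of_nonneg (fun x _ => Finset.sum_nonneg fun y _ => nn x y)).1 h0 x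
      (Finset.mem_univ _)
    have := (Finset.sum_eq_zero_iff_of_nonneg (fun y _ => nn x y)).1 this y (Finset.mem_univ _)
    rw [if_pos hxy] at this
    have := mul_self_eq_zero.1 this
    linarith
  obtain ⟨w⟩ := hG.preconnected x y
  induction w with
  | nil => rfl
  | cons hadj _ ih => exact (h1 _ _ hadj).trans ih

lemma degR_pos [Fintype V] (G : SimpleGraph V) (hG : G.Connected) {x y : V} (h : x ≠ y) :
    0 < degR G x := by
  obtain ⟨w⟩ := hG.preconnected x y
  cases w with
  | nil => exact absurd rfl h
  | cons hadj _ =>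
    unfold degR
    exact_mod_cast Finset.card_pos.2 ⟨_, Finset.mem_filter.2 ⟨Finset.mem_univ _, hadj⟩⟩

lemma exists_super [Fintype V] (G : SimpleGraph V) (hG : G.Connected) (y : V) :
    ∃ g : V → ℝ, (∀ x, 0 ≤ g x) ∧ ∀ x, x ≠ y → Lap G g x = degR G x := by
  let A : (V → ℝ) →ₗ[ℝ] (V → ℝ) :=
    { toFun := fun f x => if x = y then f y else Lap G f x
      map_add' := by
        intro f g; ext x
        have := Lap_add G f g x
        simp only [Pi.add_apply]
        split_ifs
        · rfl
        · exact this
      map_smul' := by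
        intro a f; ext x
        have := Lap_smul G a f x
        simp only [Pi.smul_apply, smul_eq_mul, RingHom.id_apply]
        split_ifs
        · rfl
        · exact this }
  have hA : ∀ f x, A f x = if x = y then f y else Lap G f x := fun _ _ => rfl
  have inj : Function.Injective A := by
    rw [injective_iff_map_eq_zero]
    intro f hf
    have hy : f y = 0 := by
      have := congrFun hf y
      simpa [hA] using this
    have hz : ∑ x, f x * Lap G f x = 0 := by
      refine Finset.sum_eq_zero fun x _ => ?_
      by_cases hxy : x = y
      · rw [hxy, hy, zero_mul]
      · have := congrFun hf x
        rw [hA, if_neg hxy] at this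
        rw [this]; simp
    ext x
    rw [const_of_form G hG f hz x y, hy]; rfl
  obtain ⟨g, hg⟩ := LinearMap.injective_iff_surjective.1 inj
    (fun x => if x = y then 0 else degR G x)
  have hgy : g y = 0 := by
    have := congrFun hg y
    simpa [hA] using this
  have hgx : ∀ x, x ≠ y → Lap G g x = degR G x := by
    intro x hx
    have := congrFun hg x
    simpa [hA, hx] using this
  refine ⟨g, ?_, hgx⟩
  haveI : Nonempty V := ⟨y⟩
  obtain ⟨x0, hx0⟩ := Finite.exists_min g
  by_cases h : x0 = y
  · intro x; rw [← hgy, ← h]; exact hx0 x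
  · exfalso
    have h1 := hgx x0 h
    have h2 := degR_pos G hG h
    have h3 : Lap G g x0 ≤ 0 := Finset.sum_nonpos fun z _ => by
      split_ifs
      · linarith [hx0 z]
      · exact le_rfl
    linarith

lemma hitMat_nonneg [Fintype V] (G : SimpleGraph V) (y u v : V) : 0 ≤ hitMat G y u v := by
  simp only [hitMat, Matrix.of_apply]
  split_ifs
  · exact le_rfl
  · unfold degR; positivity
  · exact le_rfl

noncomputable def surv [Fintype V] (G : SimpleGraph V) (y : V) (k : ℕ) (x : V) : ℝ :=
  ∑ z, (hitMat G y ^ k) x z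

lemma surv_zero [Fintype V] (G : SimpleGraph V) (y x : V) : surv G y 0 x = 1 := by
  simp [surv, Matrix.one_apply]

lemma surv_succ [Fintype V] (G : SimpleGraph V) (y x : V) (k : ℕ) :
    surv G y (k+1) x = ∑ v, hitMat G y x v * surv G y k v := by
  simp only [surv, pow_succ', Matrix.mul_apply, Finset.mul_sum]
  rw [Finset.sum_comm]

lemma surv_nonneg [Fintype V] (G : SimpleGraph V) (y : V) (k : ℕ) : ∀ x, 0 ≤ surv G y k x := by
  induction k with
  | zero => intro x; rw [surv_zero]; norm_num
  | succ k ih =>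
    intro x; rw [surv_succ]
    exact Finset.sum_nonneg fun v _ => mul_nonneg (hitMat_nonneg _ _ _ _) (ih v)

lemma hit_mul [Fintype V] (G : SimpleGraph V) (y x : V) (g : V → ℝ) :
    ∑ v, hitMat G y x v * g v
      = (degR G x)⁻¹ * ∑ v, if G.Adj x v then (if v = y then 0 else g v) else 0 := by
  rw [Finset.mul_sum]
  refine Finset.sum_congr rfl fun v _ => ?_
  simp only [hitMat, Matrix.of_apply]
  split_ifs <;> simp

lemma surv_summable [Fintype V] (G : SimpleGraph V) (hG : G.Connected) (y x : V) :
    Summable fun k => surv G y k x := by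
  obtain ⟨g, g0, hg⟩ := exists_super G hG y
  have key : ∀ x, x ≠ y → 1 + ∑ v, hitMat G y x v * g v ≤ g x := by
    intro x hx
    have hd := degR_pos G hG hx
    have h1 := hg x hx
    rw [Lap_eq] at h1
    rw [hit_mul]
    have h2 : (∑ v, if G.Adj x v then (if v = y then 0 else g v) else 0)
        ≤ ∑ v, if G.Adj x v then g v else 0 := by
      refine Finset.sum_le_sum fun v _ => ?_
      split_ifs
      · exact g0 v
      · exact le_rfl
      · exact le_rfl
    have h3 : (degR G x)⁻¹ * (∑ v, if G.Adj x v then (if v = y then 0 else g v) else 0)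
        ≤ (degR G x)⁻¹ * (degR G x * g x - degR G x) :=
      mul_le_mul_of_nonneg_left (by linarith) (inv_nonneg.2 hd.le)
    have h4 : (degR G x)⁻¹ * (degR G x * g x - degR G x) = g x - 1 := by
      field_simp
    linarith
  let g' : V → ℝ := fun z => if z = y then 1 + ∑ v, hitMat G y y v * g v else g z
  have hq : ∀ x, ∑ v, hitMat G y x v * g' v = ∑ v, hitMat G y x v * g v := by
    intro x
    refine Finset.sum_congr rfl fun v _ => ?_
    by_cases hv : v = y
    · simp [hitMat, hv]
    · simp [g', hv]
  have key' : ∀ x, 1 + ∑ v, hitMat G y x v * g' v ≤ g' x := by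
    intro x
    rw [hq]
    by_cases hx : x = y
    · simp [g', hx]
    · simpa [g', hx] using key x hx
  have g'0 : ∀ x, 0 ≤ g' x := by
    intro x
    by_cases hx : x = y
    · simp only [g', hx, if_true]
      have := Finset.sum_nonneg fun v (_ : v ∈ (Finset.univ : Finset V)) =>
        mul_nonneg (hitMat_nonneg G y y v) (g0 v)
      linarith
    · simpa [g', hx] using g0 x
  refine summable_of_sum_range_le (c := g' x) (fun k => surv_nonneg G y k x) ?_
  intro N
  revert x
  induction N with
  | zero => intro x; simpa using g'0 x
  | succ N ih =>
    intro x
    rw [Finset.sum_range_succ']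
    simp only [surv_succ, surv_zero]
    rw [Finset.sum_comm]
    simp only [← Finset.mul_sum]
    have : ∑ v, hitMat G y x v * ∑ i ∈ Finset.range N, surv G y i v
        ≤ ∑ v, hitMat G y x v * g' v :=
      Finset.sum_le_sum fun v _ => mul_le_mul_of_nonneg_left (ih v) (hitMat_nonneg _ _ _ _)
    linarith [key' x]

lemma hitting_self [Fintype V] (G : SimpleGraph V) (y : V) : hitting G y y = 0 := by
  simp [hitting]

lemma hitting_nonneg [Fintype V] (G : SimpleGraph V) (x y : V) : 0 ≤ hitting G x y := by
  unfold hitting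
  split_ifs
  · exact le_rfl
  · exact tsum_nonneg fun k => surv_nonneg G y k x

lemma hitting_rec [Fintype V] (G : SimpleGraph V) (hG : G.Connected) {x y : V} (h : x ≠ y) :
    hitting G x y = 1 + (degR G x)⁻¹ * ∑ v, if G.Adj x v then hitting G v y else 0 := by
  have h1 : hitting G x y = ∑' k, surv G y k x := by
    simp only [hitting, if_neg h, surv]
  rw [h1, (surv_summable G hG y x).tsum_eq_zero_add, surv_zero]
  congr 1
  simp only [surv_succ]
  rw [Summable.tsum_finsetSum (fun v _ => (surv_summable G hG y v).mul_left _)]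
  simp only [tsum_mul_left]
  rw [hit_mul]
  congr 1

lemma Lap_hitting_ne [Fintype V] (G : SimpleGraph V) (hG : G.Connected) {x y : V} (h : x ≠ y) :
    Lap G (fun z => hitting G z y) x = degR G x := by
  rw [Lap_eq]
  have hd := degR_pos G hG h
  have h1 := hitting_rec G hG h
  rw [h1]
  field_simp
  ring

lemma sum_degR [Fintype V] (G : SimpleGraph V) : ∑ x, degR G x = 2 * (esize G : ℝ) := by
  have h := G.sum_degrees_eq_twice_card_edges
  have h2 : esize G = G.edgeFinset.card := by
    rw [esize, Nat.card_eq_fintype_card, SimpleGraph.edgeFinset_card]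
  rw [h2]
  have h3 : ∀ x, degR G x = (G.degree x : ℝ) := by
    intro x
    rw [degR, ← SimpleGraph.card_neighborFinset_eq_degree]
    congr 2
    ext z; simp
  simp only [h3]
  exact_mod_cast h

lemma Lap_hitting [Fintype V] (G : SimpleGraph V) (hG : G.Connected) (x y : V) :
    Lap G (fun z => hitting G z y) x = degR G x - if x = y then 2 * (esize G : ℝ) else 0 := by
  by_cases h : x = y
  · subst h
    have h0 := Lap_sum_zero G (fun z => hitting G z x)
    have h1 := sum_degR G
    rw [← Finset.add_sum_erase _ _ (Finset.mem_univ x)] at h0 h1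
    have h2 : ∑ z ∈ Finset.univ.erase x, Lap G (fun z => hitting G z x) z
        = ∑ z ∈ Finset.univ.erase x, degR G z :=
      Finset.sum_congr rfl fun z hz => Lap_hitting_ne G hG (Finset.ne_of_mem_erase hz)
    rw [if_pos rfl]
    linarith
  · rw [Lap_hitting_ne G hG h, if_neg h, sub_zero]

lemma energy_eq [Fintype V] (G : SimpleGraph V) (φ : V → ℝ) :
    energyFn G φ = ∑ x, φ x * Lap G φ x := by
  rw [Lap_form, energyFn]
  simp only [sq]

lemma energy_nonneg [Fintype V] (G : SimpleGraph V) (φ : V → ℝ) : 0 ≤ energyFn G φ := by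
  unfold energyFn
  refine mul_nonneg (by norm_num) (Finset.sum_nonneg fun x _ => Finset.sum_nonneg fun y _ => ?_)
  split_ifs
  · positivity
  · exact le_rfl

lemma Lap_symm [Fintype V] (G : SimpleGraph V) (f g : V → ℝ) :
    ∑ x, g x * Lap G f x = ∑ x, f x * Lap G g x := by
  rw [Lap_form, Lap_form]
  congr 1
  exact Finset.sum_congr rfl fun x _ => Finset.sum_congr rfl fun y _ => by
    split_ifs <;> ring

lemma commute [Fintype V] (G : SimpleGraph V) (hG : G.Connected) (hm : 0 < esize G) (x y : V) :
    hitting G x y + hitting G y x = 2 * (esize G : ℝ) * eres G x y := by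
  by_cases h : x = y
  · subst h
    have he : {e : ℝ | ∃ φ : V → ℝ, φ x = 1 ∧ φ x = 0 ∧ e = energyFn G φ} = ∅ := by
      ext e
      simp only [Set.mem_ofPred_eq, Set.mem_empty_iff_false, iff_false]
      rintro ⟨φ, h1, h2, _⟩
      rw [h1] at h2
      exact one_ne_zero h2
    rw [eres, he]
    simp [hitting_self]
  set m : ℝ := (esize G : ℝ) with hmd
  have hm' : 0 < m := Nat.cast_pos.2 hm
  set C := hitting G x y + hitting G y x with hC
  have hCpos : 0 < C := by
    have h1 := hitting_rec G hG h
    have h2 : 0 ≤ (degR G x)⁻¹ * ∑ v, if G.Adj x v then hitting G v y else 0 := by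
      refine mul_nonneg (inv_nonneg.2 (degR_pos G hG h).le) (Finset.sum_nonneg fun v _ => ?_)
      split_ifs
      · exact hitting_nonneg _ _ _
      · exact le_rfl
    have h3 := hitting_nonneg G y x
    linarith
  let φ : V → ℝ := fun z => C⁻¹ * ((hitting G z y + (-1) * hitting G z x) + hitting G y x)
  have hφx : φ x = 1 := by
    simp only [φ, hitting_self]
    rw [mul_zero, add_zero, ← hC]
    exact inv_mul_cancel₀ hCpos.ne'
  have hφy : φ y = 0 := by
    simp only [φ, hitting_self]; ring
  have hL : ∀ z, Lap G φ z = (2 * m / C) * ((if z = x then 1 else 0) - (if z = y then 1 else 0)) := by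
    intro z
    have hc : Lap G (fun _ => hitting G y x) z = 0 := by simp [Lap]
    simp only [φ]
    rw [Lap_smul, Lap_add, hc, Lap_add, Lap_smul, Lap_hitting G hG, Lap_hitting G hG]
    split_ifs <;> field_simp <;> ring
  have hψ : ∀ ψ : V → ℝ, ∑ z, ψ z * Lap G φ z = (2 * m / C) * (ψ x - ψ y) := by
    intro ψ
    simp only [hL]
    have : ∀ z, ψ z * (2 * m / C * ((if z = x then 1 else 0) - if z = y then 1 else 0))
        = (2 * m / C) * ((if z = x then ψ z else 0) - if z = y then ψ z else 0) := by
      intro z; split_ifs <;> ring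
    simp only [this]
    rw [← Finset.mul_sum, Finset.sum_sub_distrib]
    simp
  have hE : energyFn G φ = 2 * m / C := by
    rw [energy_eq, hψ, hφx, hφy]; ring
  have hleast : IsLeast {e : ℝ | ∃ φ : V → ℝ, φ x = 1 ∧ φ y = 0 ∧ e = energyFn G φ} (2 * m / C) := by
    refine ⟨⟨φ, hφx, hφy, hE.symm⟩, ?_⟩
    rintro e ⟨ψ, h1, h0, rfl⟩
    have n1 := energy_nonneg G (fun z => ψ z + (-1) * φ z)
    rw [energy_eq] at n1
    have e1 : ∀ z, (ψ z + (-1) * φ z) * Lap G (fun z => ψ z + (-1) * φ z) z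
        = ψ z * Lap G ψ z - ψ z * Lap G φ z - φ z * Lap G ψ z + φ z * Lap G φ z := by
      intro z; rw [Lap_add, Lap_smul]; ring
    simp only [e1, Finset.sum_add_distrib, Finset.sum_sub_distrib] at n1
    rw [Lap_symm G ψ φ, hψ, hψ, ← energy_eq, h1, h0, hφx, hφy] at n1
    linarith
  rw [eres, hleast.csInf_eq]
  field_simp

/-- Structure of the rooted forest: `ρ` is the distance to the cycle. -/
lemma uni_struct [Fintype V] (G : SimpleGraph V) (n l : ℕ) [NeZero l]
    (hn : Fintype.card V = n) (hconn : G.Connected) (huni : esize G = n)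
    (hl : 3 ≤ l) (c : Fin l → V) (hinj : Function.Injective c)
    (hadj : ∀ i : Fin l, G.Adj (c i) (c (i + 1))) :
    ∃ (ρ : V → ℕ) (p : V → V),
      (∀ x, ρ x = 0 ↔ x ∈ Set.range c) ∧
      (∀ i x, ρ x ≤ G.dist (c i) x) ∧
      (∀ x, ρ x ≠ 0 → G.Adj x (p x) ∧ ρ (p x) + 1 = ρ x) ∧
      (∀ x y, G.Adj x y → (∃ i, s(x, y) = s(c i, c (i + 1))) ∨
        (ρ x ≠ 0 ∧ y = p x) ∨ (ρ y ≠ 0 ∧ x = p y)) := by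
  have hmin : ∀ x, ∃ i, ∀ j, G.dist (c i) x ≤ G.dist (c j) x := fun x =>
    Finite.exists_min (fun i => G.dist (c i) x)
  choose i hi using hmin
  let ρ : V → ℕ := fun x => G.dist (c (i x)) x
  have hρle : ∀ j x, ρ x ≤ G.dist (c j) x := fun j x => hi x j
  have hρ0 : ∀ x, ρ x = 0 ↔ x ∈ Set.range c := by
    intro x
    constructor
    · intro h
      have := (hconn.dist_eq_zero_iff).1 h
      exact ⟨_, this⟩
    · rintro ⟨j, rfl⟩
      have := hρle j (c j)
      simpa using this
  have hstep : ∀ x y, G.Adj x y → ρ x ≤ ρ y + 1 := by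
    intro x y hxy
    have h1 := hρle (i y) x
    have h2 := hconn.dist_triangle (u := c (i y)) (v := y) (w := x)
    have h3 : G.dist y x = 1 := SimpleGraph.dist_eq_one_iff_adj.2 hxy.symm
    have h4 : ρ y = G.dist (c (i y)) y := rfl
    omega
  have hpar : ∀ x, ∃ u, ρ x ≠ 0 → G.Adj x u ∧ ρ u + 1 = ρ x := by
    intro x
    by_cases h : ρ x = 0
    · exact ⟨x, fun h' => absurd h h'⟩
    obtain ⟨w, hw⟩ := hconn.exists_walk_length_eq_dist x (c (i x))
    have hw' : w.length = ρ x := by rw [hw, SimpleGraph.dist_comm]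
    clear hw
    have hgen : ∀ t, t = c (i x) → ∀ w : G.Walk x t, w.length = ρ x →
        ∃ u, ρ x ≠ 0 → G.Adj x u ∧ ρ u + 1 = ρ x := by
      intro t ht w hw'
      cases w with
      | nil => exact absurd hw'.symm h
      | @cons _ u _ hxu q =>
        refine ⟨u, fun _ => ⟨hxu, ?_⟩⟩
        have h1 := hstep x u hxu
        have h2 := hρle (i x) u
        have h3 := SimpleGraph.dist_le q
        rw [SimpleGraph.dist_comm] at h3
        rw [← ht] at h2
        rw [SimpleGraph.Walk.length_cons] at hw'
        omega
    exact hgen _ rfl w hw'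
  choose p hp using hpar
  refine ⟨ρ, p, hρ0, hρle, hp, ?_⟩
  have hc0 : ∀ j, ρ (c j) = 0 := fun j => (hρ0 _).2 ⟨j, rfl⟩
  have hix : ∀ x, ρ x = 0 → c (i x) = x := fun x h => (hconn.dist_eq_zero_iff).1 h
  let Φ : V → G.edgeSet := fun x =>
    if h : ρ x = 0 then ⟨s(c (i x), c (i x + 1)), hadj _⟩ else ⟨s(x, p x), (hp x h).1⟩
  have hl2 : ∀ a b : Fin l, a = b + 1 → a + 1 = b → False := by
    intro a b h1 h2
    rw [h1, add_assoc] at h2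
    have h3 : (1 : Fin l) + 1 = 0 := by simpa using h2
    have h4 := congrArg Fin.val h3
    rw [Fin.val_add, Fin.val_one', Fin.val_zero] at h4
    rw [Nat.mod_eq_of_lt (by omega : 1 < l), Nat.mod_eq_of_lt (by omega : 1 + 1 < l)] at h4
    omega
  have hΦ : Function.Injective Φ := by
    intro x y hxy
    have hv := congrArg Subtype.val hxy
    by_cases hx : ρ x = 0 <;> by_cases hy : ρ y = 0
    · simp only [Φ, hx, hy, dif_pos, Sym2.eq_iff] at hv
      rcases hv with ⟨h1, _⟩ | ⟨h1, h2⟩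
      · rw [hix x hx, hix y hy] at h1; exact h1
      · exact (hl2 _ _ (hinj h1) (hinj h2)).elim
    · simp only [Φ, hx, hy, dif_pos, dif_neg, not_false_eq_true, Sym2.eq_iff] at hv
      rcases hv with ⟨h1, _⟩ | ⟨_, h1⟩ <;> exact absurd (h1 ▸ hc0 _) hy
    · simp only [Φ, hx, hy, dif_pos, dif_neg, not_false_eq_true, Sym2.eq_iff] at hv
      rcases hv with ⟨h1, _⟩ | ⟨h1, _⟩ <;> exact absurd (h1 ▸ hc0 _) hx
    · simp only [Φ, hx, hy, dif_neg, not_false_eq_true, Sym2.eq_iff] at hv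
      rcases hv with ⟨h1, _⟩ | ⟨h1, h2⟩
      · exact h1
      · have a := (hp x hx).2
        have b := (hp y hy).2
        rw [← h1] at b; rw [h2] at a
        omega
  have hcard : Fintype.card V = Fintype.card G.edgeSet := by
    rw [hn, ← huni, esize, Nat.card_eq_fintype_card]
  have hsurj := ((Fintype.bijective_iff_injective_and_card Φ).2 ⟨hΦ, hcard⟩).2
  intro x y hxy
  obtain ⟨z, hz⟩ := hsurj ⟨s(x, y), hxy⟩
  have hv := congrArg Subtype.val hz
  by_cases h : ρ z = 0
  · left
    simp only [Φ, h, dif_pos] at hv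
    exact ⟨_, hv.symm⟩
  · right
    simp only [Φ, h, dif_neg, not_false_eq_true, Sym2.eq_iff] at hv
    rcases hv with ⟨h1, h2⟩ | ⟨h1, h2⟩
    · left; rw [← h1]; exact ⟨h, h2.symm⟩
    · right; rw [← h1]; exact ⟨h, h2.symm⟩

lemma uni_rho [Fintype V] (G : SimpleGraph V) (n l : ℕ) [NeZero l]
    (hn : Fintype.card V = n) (hconn : G.Connected) (huni : esize G = n)
    (hl : 3 ≤ l) (c : Fin l → V) (hinj : Function.Injective c)
    (hadj : ∀ i : Fin l, G.Adj (c i) (c (i + 1))) :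
    ∃ ρ : V → ℝ, (∀ x, Lap G ρ x = 2 - degR G x) ∧
      (∀ k x, (G.deleteEdges (cycleEdges c)).Reachable (c k) x → (G.dist x (c k) : ℝ) = ρ x) ∧
      (∑ i : Fin l, branchD (G.deleteEdges (cycleEdges c)) (c i)) = ∑ x, ρ x := by
  obtain ⟨ρ, p, h0, hle, hp, hedge⟩ := uni_struct G n l hn hconn huni hl c hinj hadj
  set G' := G.deleteEdges (cycleEdges c) with hG'
  have hc0 : ∀ j, ρ (c j) = 0 := fun j => (h0 _).2 ⟨j, rfl⟩
  have hcyc : ∀ x y, s(x, y) ∈ cycleEdges c → ρ x = 0 ∧ ρ y = 0 := by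
    rintro x y ⟨i, hi⟩
    rcases Sym2.eq_iff.1 hi with ⟨rfl, rfl⟩ | ⟨rfl, rfl⟩ <;> exact ⟨hc0 _, hc0 _⟩
  have hp' : ∀ x, ρ x ≠ 0 → G'.Adj x (p x) := by
    intro x hx
    rw [hG', SimpleGraph.deleteEdges_adj]
    exact ⟨(hp x hx).1, fun h => hx (hcyc _ _ h).1⟩
  have hedge' : ∀ x y, G'.Adj x y → (ρ x ≠ 0 ∧ y = p x) ∨ (ρ y ≠ 0 ∧ x = p y) := by
    intro x y hxy
    rw [hG', SimpleGraph.deleteEdges_adj] at hxy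
    rcases hedge x y hxy.1 with ⟨i, hi⟩ | h
    · exact absurd ⟨i, hi.symm⟩ hxy.2
    · exact h
  let root : V → V := fun x => p^[ρ x] x
  have hroot : ∀ x, ρ x ≠ 0 → root x = root (p x) := by
    intro x hx
    simp only [root]
    rw [← (hp x hx).2, Function.iterate_succ_apply]
  have hrootc : ∀ j, root (c j) = c j := by intro j; simp [root, hc0]
  have hrootinv : ∀ x y, G'.Reachable x y → root x = root y := by
    rintro x y ⟨w⟩
    induction w with
    | nil => rfl
    | @cons a b _ hab _ ih =>
      rw [← ih]
      rcases hedge' a b hab with ⟨h, rfl⟩ | ⟨h, rfl⟩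
      · exact hroot _ h
      · exact (hroot _ h).symm
  have hwalk : ∀ N x, ρ x = N → ∃ j, ∃ w : G'.Walk x (c j), w.length = N := by
    intro N
    induction N with
    | zero =>
      intro x hx
      obtain ⟨j, rfl⟩ := (h0 x).1 hx
      exact ⟨j, .nil, rfl⟩
    | succ N ih =>
      intro x hx
      have hx' : ρ x ≠ 0 := by omega
      obtain ⟨j, w, hw⟩ := ih (p x) (by have := (hp x hx').2; omega)
      exact ⟨j, .cons (hp' x hx') w, by simp [hw]⟩
  have hdist : ∀ k x, G'.Reachable (c k) x → G'.dist (c k) x = ρ x ∧ G.dist x (c k) = ρ x := by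
    intro k x hr
    obtain ⟨j, w, hw⟩ := hwalk _ x rfl
    have e : j = k := by
      have a := hrootinv _ _ hr
      have b := hrootinv _ _ w.reachable
      rw [hrootc] at a b
      exact hinj (b.symm.trans a.symm)
    subst e
    have u1 := SimpleGraph.dist_le w
    obtain ⟨w2, hw2⟩ := hr.exists_walk_length_eq_dist
    have u2 := SimpleGraph.dist_le (w2.mapLe (SimpleGraph.deleteEdges_le (G := G) (cycleEdges c)))
    rw [SimpleGraph.Walk.length_map] at u2
    have u3 := hle j x
    rw [SimpleGraph.dist_comm] at u1
    rw [SimpleGraph.dist_comm (u := x)]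
    constructor <;> omega
  refine ⟨fun x => ρ x, ?_, ?_, ?_⟩
  · intro x
    by_cases hx : ρ x = 0
    · obtain ⟨i, rfl⟩ := (h0 x).1 hx
      have hne : c (i + 1) ≠ c (i - 1) := by
        intro h
        have h := hinj h
        have h3 : (1 : Fin l) + 1 = 0 := by
          have : i + 1 + 1 = i := by rw [h]; simp
          rw [add_assoc] at this
          simpa using this
        have h4 := congrArg Fin.val h3
        rw [Fin.val_add, Fin.val_one', Fin.val_zero] at h4
        rw [Nat.mod_eq_of_lt (by omega : 1 < l), Nat.mod_eq_of_lt (by omega : 1 + 1 < l)] at h4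
        omega
      have hadj2 : G.Adj (c i) (c (i - 1)) := by
        have := (hadj (i - 1)).symm
        simpa using this
      have key : ∀ y, (if G.Adj (c i) y then ((ρ (c i) : ℝ) - ρ y) else 0)
          = (if y = c (i + 1) then 1 else 0) + (if y = c (i - 1) then 1 else 0)
            - (if G.Adj (c i) y then 1 else 0) := by
        intro y
        rw [hc0]
        by_cases e1 : y = c (i + 1)
        · rw [e1, if_pos (hadj i), if_pos rfl, if_neg hne, if_pos (hadj i), hc0]; norm_num
        by_cases e2 : y = c (i - 1)
        · rw [e2, if_pos hadj2, if_pos rfl, if_neg hne.symm, if_pos hadj2, hc0]; norm_num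
        rw [if_neg e1, if_neg e2]
        by_cases ha : G.Adj (c i) y
        · rw [if_pos ha, if_pos ha]
          rcases hedge _ _ ha with ⟨j, hj⟩ | ⟨h, _⟩ | ⟨h, h'⟩
          · rcases Sym2.eq_iff.1 hj with ⟨a, b⟩ | ⟨a, b⟩
            · rw [← hinj a] at b; exact absurd b e1
            · have : j = i - 1 := by rw [hinj a]; simp
              rw [this] at b; exact absurd b e2
          · exact absurd (hc0 i) h
          · have := (hp y h).2
            rw [← h', hc0] at this
            rw [← this]; norm_num
        · rw [if_neg ha, if_neg ha]; norm_num
      rw [Lap, Finset.sum_congr rfl fun y _ => key y, Finset.sum_sub_distrib,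
        Finset.sum_add_distrib, degR, ← Finset.sum_filter (fun y => G.Adj (c i) y)]
      simp
      norm_num
    · have key : ∀ y, (if G.Adj x y then ((ρ x : ℝ) - ρ y) else 0)
          = (if y = p x then 2 else 0) - (if G.Adj x y then 1 else 0) := by
        intro y
        by_cases e1 : y = p x
        · have a := (hp x hx).1
          have b := (hp x hx).2
          rw [e1, if_pos a, if_pos rfl, if_pos a, ← b]; push_cast; ring
        rw [if_neg e1]
        by_cases ha : G.Adj x y
        · rw [if_pos ha, if_pos ha]
          rcases hedge _ _ ha with ⟨j, hj⟩ | ⟨_, h⟩ | ⟨h, h'⟩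
          · exact absurd (hcyc x y ⟨j, hj.symm⟩).1 hx
          · exact absurd h e1
          · have := (hp y h).2
            rw [← h'] at this
            rw [← this]; push_cast; ring
        · rw [if_neg ha, if_neg ha]; norm_num
      rw [Lap, Finset.sum_congr rfl fun y _ => key y, Finset.sum_sub_distrib,
        degR, ← Finset.sum_filter (fun y => G.Adj x y)]
      simp
  · intro k x hr
    exact congrArg Nat.cast (hdist k x hr).2
  · simp only [branchD]
    rw [Finset.sum_comm]
    refine Finset.sum_congr rfl fun x _ => ?_
    obtain ⟨j, w, _⟩ := hwalk _ x rfl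
    have hr : G'.Reachable (c j) x := w.reachable.symm
    rw [Finset.sum_eq_single j]
    · rw [if_pos hr, (hdist j x hr).1]
    · intro b _ hb
      rw [if_neg]
      intro hr'
      have a := hrootinv _ _ hr
      have b := hrootinv _ _ hr'
      rw [hrootc] at a b
      exact hb (hinj (b.trans a.symm))
    · intro h; exact absurd (Finset.mem_univ _) h

/-- For an `n`-vertex unicyclic graph `G` with `x ∈ V(T_k)`,
`CC(x) = 2·Kf(G) + Σ_{i=1}^{l} D_{T_i}(v_i) − n·d(x,v_k)`. -/
theorem coverCost_formula [Fintype V] (G : SimpleGraph V) (n l : ℕ) [NeZero l]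
    (hn : Fintype.card V = n) (hconn : G.Connected) (huni : esize G = n)
    (hl : 3 ≤ l) (c : Fin l → V) (hinj : Function.Injective c)
    (hadj : ∀ i : Fin l, G.Adj (c i) (c (i + 1)))
    (k : Fin l) (x : V) (hx : (G.deleteEdges (cycleEdges c)).Reachable (c k) x) :
    coverCost G x = 2 * Kf G
      + (∑ i : Fin l, branchD (G.deleteEdges (cycleEdges c)) (c i))
      - (n : ℝ) * (G.dist x (c k) : ℝ) := by
  obtain ⟨ρ, hL, hd, hb⟩ := uni_rho G n l hn hconn huni hl c hinj hadj
  rw [hb, hd k x hx]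
  haveI : Nonempty V := ⟨x⟩
  have hnpos : 0 < n := hn ▸ Fintype.card_pos
  have hn0 : (n : ℝ) ≠ 0 := by exact_mod_cast hnpos.ne'
  have hLap : ∀ z, Lap G (fun z => coverCost G z + (n : ℝ) * ρ z) z = 0 := by
    intro z
    rw [Lap_add, Lap_smul, hL]
    have : Lap G (fun z => coverCost G z) z = n * degR G z - 2 * n := by
      simp only [coverCost]
      rw [Lap_fsum Finset.univ G (fun y z => hitting G z y)]
      simp only [Lap_hitting G hconn, huni, Finset.sum_sub_distrib]
      simp [hn]
    rw [this]; ring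
  have hconst := const_of_form G hconn (fun z => coverCost G z + (n : ℝ) * ρ z)
    (by simp [hLap])
  have hsum : ∑ z, (coverCost G z + (n : ℝ) * ρ z) = n * (coverCost G x + (n : ℝ) * ρ x) := by
    rw [Finset.sum_congr rfl fun z _ => hconst z x]
    simp [hn]
    ring
  have hCC : ∑ z, coverCost G z = 2 * n * Kf G := by
    have h1 : ∑ z, ∑ y, (hitting G z y + hitting G y z) = 2 * ∑ z, coverCost G z := by
      simp only [Finset.sum_add_distrib, coverCost]
      rw [Finset.sum_comm (f := fun z y => hitting G y z)]; ring
    have h2 : ∑ z, ∑ y, (hitting G z y + hitting G y z) = 4 * n * Kf G := by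
      simp only [commute G hconn (huni ▸ hnpos), huni, Kf, ← Finset.mul_sum]
      ring
    linarith
  rw [Finset.sum_add_distrib, hCC, ← Finset.mul_sum] at hsum
  have : (n : ℝ) * (coverCost G x) = n * (2 * Kf G + ∑ x, ρ x - n * ρ x) := by linarith
  exact mul_left_cancel₀ hn0 this
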